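/- arXiv:1612.02974 — 2 statements merged into one kernel-verified Lean document; each statement's English description precedes it below -/
import Mathlib

section
/- Let 0 < s < t ≤ 1. Let E ⊆ [0,1] be the compact support of an s-Ahlfors regular Borel measure with 0 ∈ E and 1 ∈ E, and let E' ⊆ [0,1] be the compact support of a t-Ahlfors regular Borel measure. Then there exists a map f : [0,1] → [0,1] which is bi-Lipschitz onto its image, i.e. there exists L ≥ 1 with L⁻¹·|x−y| ≤ |f(x)−f(y)| ≤ L·|x−y| for all x, y ∈ [0,1], and which satisfies f(E) ⊆ E'. -/
/-!
A bi-Lipschitz map of an interval is monotone, so the task is to embed `E` in `E'` increasingly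
and bi-Lipschitzly and then to fill in the gaps of `E`.

Counting disjoint balls shows that `E` has at most `C (R / r) ^ s` points that are `r`-separated
in an interval of length `R` (`card_le_of_separated`), while every ball of radius `R` in `E'`
contains at least `c (R / r) ^ t` such points (`exists_separated`). Since `s < 1`, the first bound
also makes `E` uniformly disconnected: a stretch with no gap longer than `r` has length at most
`D r` (`length_le_of_no_cut`).

Fix a small ratio `ρ`. A finite `A ⊆ E` of diameter `R`, cut at its gaps longer than `ρ R / D`,
falls into at most `C (D / ρ) ^ s + 1` clusters of diameter at most `ρ R`. As `s < t`, for small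
`ρ` the set `E'` has that many `ρ R`-separated points (up to a factor) in a ball of radius
comparable to `R`. Sending the clusters, in order, near these points and recursing inside each
cluster gives an increasing embedding of `A`. Any pair of points is separated at exactly one
stage, where both its distance and the distance of its images are comparable to the current
diameter, so the constants depend on `ρ` only (`exists_finite_embedding`). Compactness passes from
finite sets to `E` (`exists_embedding_of_finite`), and a one-sided McShane formula extends the
embedding to the line with the same slope bounds (`exists_extension`).
-/

open MeasureTheory Metric Set

/-- The topological support of a Borel measure on `ℝ`: the set of points all of whose
open neighbourhoods have positive measure. -/
def measureSupport (μ : Measure ℝ) : Set ℝ :=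
  {x | ∀ U : Set ℝ, IsOpen U → x ∈ U → 0 < μ U}

/-- The complement of the support is null, since `ℝ` is second countable. -/
lemma measure_compl_measureSupport (μ : Measure ℝ) : μ (measureSupport μ)ᶜ = 0 := by
  apply measure_null_of_locally_null
  intro x hx
  have hx' : ∃ U : Set ℝ, IsOpen U ∧ x ∈ U ∧ μ U = 0 := by
    by_contra! h
    exact hx fun U hU hxU => pos_iff_ne_zero.mpr (h U hU hxU)
  obtain ⟨U, hU, hxU, h0⟩ := hx'
  exact ⟨U, mem_nhdsWithin_of_mem_nhds (hU.mem_nhds hxU), h0⟩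

/-- Packing bound: an `r`-separated subset of an `s`-regular set that lies in an interval of
length `R` has at most `K ^ 2 * 6 ^ s * (R / r) ^ s` points, because the balls of radius `r / 3`
around its points are disjoint and lie in a ball of radius `2 * R`. -/
lemma card_le_of_separated {s K : ℝ} (hs : 0 < s) (hK : 1 ≤ K) {μ : Measure ℝ} {E : Set ℝ}
    (hE : E = measureSupport μ) (hEsub : E ⊆ Icc 0 1)
    (hreg : ∀ x ∈ E, ∀ r : ℝ, 0 < r → r ≤ 1 →
      ENNReal.ofReal (K⁻¹ * r ^ s) ≤ μ (closedBall x r) ∧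
      μ (closedBall x r) ≤ ENNReal.ofReal (K * r ^ s))
    (F : Finset ℝ) (hF : (F : Set ℝ) ⊆ E) (a R r : ℝ) (hr : 0 < r) (hr1 : r ≤ 1) (hrR : r ≤ R)
    (hFR : ∀ x ∈ F, x ∈ Icc a (a + R))
    (hsep : ∀ x ∈ F, ∀ y ∈ F, x < y → r ≤ y - x) :
    (F.card : ℝ) ≤ K ^ 2 * 6 ^ s * (R / r) ^ s := by
  have hK0 : 0 < K := by linarith
  have hR : 0 < R := by linarith
  -- Beyond the diameter the upper bound persists, since the whole mass is at most `K`.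
  have hup : ∀ x ∈ E, ∀ q : ℝ, 0 < q → μ (closedBall x q) ≤ ENNReal.ofReal (K * q ^ s) := by
    intro x hx q hq
    rcases le_total q 1 with h | h
    · exact (hreg x hx q hq h).2
    · have hsub : closedBall x q ⊆ closedBall x 1 ∪ Eᶜ := by
        intro z _
        by_cases hz : z ∈ E
        · left
          have h1 := hEsub hz
          have h2 := hEsub hx
          rw [mem_closedBall, Real.dist_eq, abs_le]
          constructor <;> linarith [h1.1, h1.2, h2.1, h2.2]
        · exact Or.inr hz
      calc μ (closedBall x q) ≤ μ (closedBall x 1) + μ Eᶜ :=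
            (measure_mono hsub).trans (measure_union_le _ _)
        _ = μ (closedBall x 1) := by rw [hE, measure_compl_measureSupport, add_zero]
        _ ≤ ENNReal.ofReal (K * 1 ^ s) := (hreg x hx 1 one_pos le_rfl).2
        _ ≤ _ := by
            apply ENNReal.ofReal_le_ofReal
            gcongr
  rcases F.eq_empty_or_nonempty with rfl | ⟨x₀, hx₀⟩
  · simp only [Finset.card_empty, Nat.cast_zero]
    positivity
  have hdisj : (F : Set ℝ).PairwiseDisjoint fun x => closedBall x (r / 3) := by
    intro x hx y hy hxy
    apply closedBall_disjoint_closedBall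
    rw [Real.dist_eq]
    rcases lt_or_gt_of_ne hxy with h | h
    · have := hsep x hx y hy h
      rw [abs_of_neg (by linarith)]
      linarith
    · have := hsep y hy x hx h
      rw [abs_of_pos (by linarith)]
      linarith
  have hsub : (⋃ x ∈ F, closedBall x (r / 3)) ⊆ closedBall x₀ (2 * R) := by
    intro z hz
    simp only [mem_iUnion, mem_closedBall, Real.dist_eq, abs_le] at hz ⊢
    obtain ⟨x, hx, h1, h2⟩ := hz
    have h3 := hFR x hx
    have h4 := hFR x₀ hx₀
    constructor <;> linarith [h3.1, h3.2, h4.1, h4.2]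
  have hmain : ENNReal.ofReal (F.card * (K⁻¹ * (r / 3) ^ s))
      ≤ ENNReal.ofReal (K * (2 * R) ^ s) := by
    calc ENNReal.ofReal (F.card * (K⁻¹ * (r / 3) ^ s))
        = ∑ _x ∈ F, ENNReal.ofReal (K⁻¹ * (r / 3) ^ s) := by
          rw [Finset.sum_const, nsmul_eq_mul, ENNReal.ofReal_mul (by positivity),
            ENNReal.ofReal_natCast]
      _ ≤ ∑ x ∈ F, μ (closedBall x (r / 3)) :=
          Finset.sum_le_sum fun x hx => (hreg x (hF hx) (r / 3) (by linarith) (by linarith)).1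
      _ = μ (⋃ x ∈ F, closedBall x (r / 3)) :=
          (measure_biUnion_finset hdisj fun _ _ => isClosed_closedBall.measurableSet).symm
      _ ≤ μ (closedBall x₀ (2 * R)) := measure_mono hsub
      _ ≤ _ := hup x₀ (hF hx₀) _ (by linarith)
  rw [ENNReal.ofReal_le_ofReal_iff (by positivity)] at hmain
  have hpow : K * (2 * R) ^ s = (K ^ 2 * 6 ^ s * (R / r) ^ s) * (K⁻¹ * (r / 3) ^ s) := by
    have h1 : (2 * R) = 6 * (R / r) * (r / 3) := by field_simp; norm_num
    rw [h1, Real.mul_rpow (by positivity) (by positivity),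
      Real.mul_rpow (by positivity) (by positivity)]
    field_simp
  rw [hpow] at hmain
  exact le_of_mul_le_mul_right hmain (by positivity)

/-- A regular set contains many separated points: inside a ball of radius `R` there are `M`
points, listed increasingly with gaps at least `r`, as soon as `M ≤ K⁻² (R / r) ^ t`. Fewer than
that many balls of radius `r` cannot exhaust the mass of the ball of radius `R`. -/
lemma exists_separated {t K : ℝ} (hK : 1 ≤ K) {ν : Measure ℝ} {E : Set ℝ}
    (hE : E = measureSupport ν) {d : ℝ}
    (hreg : ∀ x ∈ E, ∀ r : ℝ, 0 < r → r ≤ d →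
      ENNReal.ofReal (K⁻¹ * r ^ t) ≤ ν (closedBall x r) ∧
      ν (closedBall x r) ≤ ENNReal.ofReal (K * r ^ t))
    {y : ℝ} (hy : y ∈ E) {R r : ℝ} (hR : 0 < R) (hRd : R ≤ d) (hr : 0 < r) (hrd : r ≤ d)
    (M : ℕ) (hM : (M : ℝ) ≤ (K ^ 2)⁻¹ * (R / r) ^ t) :
    ∃ p : ℕ → ℝ, (∀ i < M, p i ∈ E ∧ |p i - y| ≤ R) ∧
      ∀ i j, i < j → j < M → r ≤ p j - p i := by
  have hK0 : 0 < K := by linarith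
  have key : ∀ m : ℕ, m ≤ M → ∃ F : Finset ℝ, F.card = m ∧
      (∀ x ∈ F, x ∈ E ∧ |x - y| ≤ R) ∧ ∀ x ∈ F, ∀ z ∈ F, x < z → r ≤ z - x := by
    intro m
    induction m with
    | zero => intro _; exact ⟨∅, by simp⟩
    | succ m ih =>
      intro hm
      obtain ⟨F, hcard, hFE, hFs⟩ := ih (by omega)
      have hex : ∃ x ∈ E, |x - y| ≤ R ∧ ∀ z ∈ F, r < |x - z| := by
        by_contra! hcon
        have hsub : closedBall y R ⊆ (⋃ z ∈ F, closedBall z r) ∪ Eᶜ := by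
          intro x hx
          by_cases hxE : x ∈ E
          · left
            rw [mem_closedBall, Real.dist_eq] at hx
            obtain ⟨z, hz, hxz⟩ := hcon x hxE hx
            simp only [mem_iUnion, mem_closedBall, Real.dist_eq]
            exact ⟨z, hz, hxz⟩
          · exact Or.inr hxE
        have h1 : ENNReal.ofReal (K⁻¹ * R ^ t) ≤ ENNReal.ofReal (F.card * (K * r ^ t)) := by
          calc ENNReal.ofReal (K⁻¹ * R ^ t) ≤ ν (closedBall y R) := (hreg y hy R hR hRd).1
            _ ≤ ν (⋃ z ∈ F, closedBall z r) + ν Eᶜ :=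
                (measure_mono hsub).trans (measure_union_le _ _)
            _ = ν (⋃ z ∈ F, closedBall z r) := by
                rw [hE, measure_compl_measureSupport, add_zero]
            _ ≤ ∑ z ∈ F, ν (closedBall z r) := measure_biUnion_finset_le _ _
            _ ≤ ∑ _z ∈ F, ENNReal.ofReal (K * r ^ t) :=
                Finset.sum_le_sum fun z hz => (hreg z (hFE z hz).1 r hr hrd).2
            _ = _ := by
                rw [Finset.sum_const, nsmul_eq_mul,
                  ENNReal.ofReal_mul (p := (F.card : ℝ)) (by positivity),
                  ENNReal.ofReal_natCast]
        rw [ENNReal.ofReal_le_ofReal_iff (by positivity), hcard] at h1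
        have h2 : (m : ℝ) + 1 ≤ (K ^ 2)⁻¹ * (R / r) ^ t := by
          refine le_trans ?_ hM
          exact_mod_cast hm
        have h3 : ((K ^ 2)⁻¹ * (R / r) ^ t) * (K * r ^ t) = K⁻¹ * R ^ t := by
          rw [Real.div_rpow hR.le hr.le]
          have : r ^ t ≠ 0 := (Real.rpow_pos_of_pos hr t).ne'
          field_simp
        have h4 : 0 < K * r ^ t := by positivity
        nlinarith [mul_le_mul_of_nonneg_right h2 h4.le]
      obtain ⟨x, hxE, hxy, hxF⟩ := hex
      have hxn : x ∉ F := fun h => by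
        have := hxF x h
        simp at this
        linarith
      refine ⟨insert x F, by rw [Finset.card_insert_of_notMem hxn, hcard], ?_, ?_⟩
      · intro z hz
        rcases Finset.mem_insert.mp hz with rfl | hz
        · exact ⟨hxE, hxy⟩
        · exact hFE z hz
      · intro u hu v hv huv
        rcases Finset.mem_insert.mp hu with rfl | hu' <;>
          rcases Finset.mem_insert.mp hv with rfl | hv'
        · exact absurd huv (lt_irrefl _)
        · have := hxF v hv'
          rw [abs_of_neg (by linarith)] at this
          linarith
        · have := hxF u hu'
          rw [abs_of_pos (by linarith)] at this
          linarith
        · exact hFs u hu' v hv' huv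
  obtain ⟨F, hcard, hFE, hFs⟩ := key M le_rfl
  refine ⟨fun i => if h : i < M then F.orderEmbOfFin hcard ⟨i, h⟩ else 0, ?_, ?_⟩
  · intro i hi
    simp only [hi, dif_pos]
    exact hFE _ (F.orderEmbOfFin_mem hcard _)
  · intro i j hij hj
    simp only [hj, hij.trans hj, dif_pos]
    exact hFs _ (F.orderEmbOfFin_mem hcard _) _ (F.orderEmbOfFin_mem hcard _)
      ((F.orderEmbOfFin hcard).strictMono hij)

/-- The packing property with exponent `s` and constant `C`: an `r`-separated finite subset of
`E` lying in an interval of length `R ≥ r` has at most `C * (R / r) ^ s` points. Only scales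
`r ≤ 1` are considered. -/
def PackingBound (E : Set ℝ) (C s : ℝ) : Prop :=
  ∀ F : Finset ℝ, (F : Set ℝ) ⊆ E → ∀ a R r : ℝ, 0 < r → r ≤ 1 → r ≤ R →
    (∀ x ∈ F, x ∈ Icc a (a + R)) → (∀ x ∈ F, ∀ y ∈ F, x < y → r ≤ y - x) →
    (F.card : ℝ) ≤ C * (R / r) ^ s

/-- The cuts of a finite set `A` at scale `r`: the points of `A` followed by a gap of `A` longer
than `r` (the largest point of `A` is a cut, vacuously). -/
noncomputable def cuts (A : Finset ℝ) (r : ℝ) : Finset ℝ :=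
  A.filter fun g => ∀ z ∈ A, g < z → r < z - g

/-- Uniform disconnectedness: when the packing exponent is below `1`, a stretch of `A` without
gaps longer than `r` has length at most a constant times `r`. Otherwise it would contain about
`length / (2 * r)` points that are `r`-separated. -/
lemma length_le_of_no_cut {E : Set ℝ} {C s : ℝ} (hC : 1 ≤ C) (hs1 : s < 1)
    (hU : PackingBound E C s) {A : Finset ℝ} (hA : (A : Set ℝ) ⊆ E) {r : ℝ} (hr : 0 < r)
    (hr1 : r ≤ 1) {x x' : ℝ} (hx : x ∈ A) (hxx : x < x')
    (hcut : ∀ g ∈ cuts A r, x ≤ g → x' ≤ g) :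
    x' - x ≤ (2 * C) ^ (1 / (1 - s)) * r := by
  have hs : 0 < 1 - s := by linarith
  have hC3 : 1 ≤ (2 * C) ^ (1 / (1 - s)) :=
    Real.one_le_rpow (by linarith) (by positivity)
  rcases le_or_gt (x' - x) r with hD | hD
  · nlinarith
  set u := (x' - x) / r with hu
  have hu0 : 0 < u := div_pos (by linarith) hr
  have hur : u * r = x' - x := by rw [hu]; field_simp
  set n := ⌈u / 2⌉₊ with hn
  -- The last point of `A` up to `x + 2 * k * r` is within `r` of it, as it is not a cut.
  have hp : ∀ k : ℕ, ∃ p : ℝ, k < n →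
      p ∈ A ∧ x ≤ p ∧ p ≤ x' ∧ x + 2 * k * r - r ≤ p ∧ p ≤ x + 2 * k * r := by
    intro k
    by_cases hk : k < n
    · have hk' : (k : ℝ) < u / 2 := Nat.lt_ceil.mp hk
      have hkx : x + 2 * k * r < x' := by nlinarith
      have hne : (A.filter fun z => z ≤ x + 2 * k * r).Nonempty :=
        ⟨x, Finset.mem_filter.mpr ⟨hx, by
          have : 0 ≤ 2 * (k : ℝ) * r := by positivity
          linarith⟩⟩
      obtain ⟨p, hpm, hpmax⟩ := Finset.exists_max_image _ id hne
      simp only [Finset.mem_filter, id] at hpm hpmax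
      have hxp : x ≤ p := hpmax x ⟨hx, by
        have : 0 ≤ 2 * (k : ℝ) * r := by positivity
        linarith⟩
      have hnc : p ∉ cuts A r := fun h => by
        have := hcut p h hxp
        linarith [hpm.2]
      simp only [cuts, Finset.mem_filter, not_and, not_forall, not_lt] at hnc
      obtain ⟨z, hz, hpz, hzr⟩ := hnc hpm.1
      have hzk : x + 2 * k * r < z := by
        by_contra! h
        linarith [hpmax z ⟨hz, h⟩]
      exact ⟨p, fun _ => ⟨hpm.1, hxp, by linarith [hpm.2], by linarith, hpm.2⟩⟩
    · exact ⟨0, fun h => absurd h hk⟩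
  choose p hp using hp
  have hgap : ∀ i j : ℕ, i < j → j < n → r ≤ p j - p i := by
    intro i j hij hj
    have h1 := (hp i (hij.trans hj)).2.2.2.2
    have h2 := (hp j hj).2.2.2.1
    have h3 : (i : ℝ) + 1 ≤ j := by exact_mod_cast hij
    nlinarith
  have hcard : ((Finset.range n).image p).card = n := by
    rw [Finset.card_image_of_injOn, Finset.card_range]
    intro i hi j hj hij
    simp only [Finset.coe_range, mem_Iio] at hi hj
    rcases lt_trichotomy i j with h | h | h
    · linarith [hgap i j h hj]
    · exact h
    · linarith [hgap j i h hi]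
  have hle := hU ((Finset.range n).image p) (by
      intro z hz
      simp only [Finset.coe_image, Finset.coe_range, mem_image, mem_Iio] at hz
      obtain ⟨k, hk, rfl⟩ := hz
      exact hA (hp k hk).1) x (x' - x) r hr hr1 hD.le (by
      intro z hz
      simp only [Finset.mem_image, Finset.mem_range] at hz
      obtain ⟨k, hk, rfl⟩ := hz
      exact ⟨(hp k hk).2.1, by linarith [(hp k hk).2.2.1]⟩) (by
      intro z hz w hw hzw
      simp only [Finset.mem_image, Finset.mem_range] at hz hw
      obtain ⟨i, hi, rfl⟩ := hz
      obtain ⟨j, hj, rfl⟩ := hw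
      rcases lt_trichotomy i j with h | h | h
      · exact hgap i j h hj
      · subst h; exact absurd hzw (lt_irrefl _)
      · linarith [hgap j i h hi])
  rw [hcard, ← hu] at hle
  have h1 : u / 2 ≤ n := Nat.le_ceil _
  have h2 : u ≤ 2 * C * u ^ s := by linarith
  have h3 : u ^ (1 - s) ≤ 2 * C := by
    rw [Real.rpow_sub hu0, Real.rpow_one, div_le_iff₀ (by positivity)]
    exact h2
  have h4 : u ≤ (2 * C) ^ (1 / (1 - s)) := by
    calc u = (u ^ (1 - s)) ^ (1 / (1 - s)) := by
          rw [← Real.rpow_mul hu0.le, mul_one_div_cancel hs.ne', Real.rpow_one]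
      _ ≤ _ := Real.rpow_le_rpow (by positivity) h3 (by positivity)
  calc x' - x = u * r := hur.symm
    _ ≤ _ := by gcongr

/-- A ratio between consecutive scales for which the target has room for all the clusters. -/
lemma exists_ratio {s t : ℝ} (hst : s < t) (M : ℝ) :
    ∃ ρ : ℝ, 0 < ρ ∧ ρ ≤ 1 / 3 ∧ M * ρ ^ (t - s) ≤ 1 := by
  have h1 : Filter.Tendsto (fun ρ : ℝ => M * ρ ^ (t - s)) (nhdsWithin 0 (Ioi 0)) (nhds 0) := by
    have h := ((Real.continuousAt_rpow_const 0 (t - s)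
      (Or.inr (by linarith))).tendsto).const_mul M
    rw [Real.zero_rpow (by linarith), mul_zero] at h
    exact h.mono_left nhdsWithin_le_nhds
  have h2 : ∀ᶠ ρ : ℝ in nhdsWithin 0 (Ioi 0), M * ρ ^ (t - s) < 1 :=
    h1.eventually (gt_mem_nhds one_pos)
  have h3 : ∀ᶠ ρ : ℝ in nhdsWithin 0 (Ioi 0), ρ < 1 / 3 :=
    nhdsWithin_le_nhds (gt_mem_nhds (by norm_num))
  have h4 : ∀ᶠ ρ : ℝ in nhdsWithin 0 (Ioi 0), 0 < ρ := self_mem_nhdsWithin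
  obtain ⟨ρ, ha, hb, hc⟩ := (h2.and (h3.and h4)).exists
  exact ⟨ρ, hc, hb.le, ha.le⟩

/-- Every finite subset of `E` embeds in `E'` increasingly, with bi-Lipschitz constants that do
not depend on the subset. The set is cut into clusters of diameter at most `ρ` times its own
diameter `R`, and the clusters are sent near distinct, well separated points of `E'` by
induction on the cardinality. Two points in different clusters are at distance comparable
to `R`, as are their images, so the constants do not deteriorate. -/
lemma exists_finite_embedding {s t : ℝ} (hs0 : 0 < s) (hst : s < t) (ht1 : t ≤ 1)
    {E : Set ℝ} (hEsub : E ⊆ Icc 0 1) {C : ℝ} (hC : 1 ≤ C) (hU : PackingBound E C s)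
    {ν : Measure ℝ} {E' : Set ℝ} (hE' : E' = measureSupport ν) {K : ℝ} (hK : 1 ≤ K)
    {d : ℝ} (hd : 0 < d)
    (hreg : ∀ x ∈ E', ∀ r : ℝ, 0 < r → r ≤ d →
      ENNReal.ofReal (K⁻¹ * r ^ t) ≤ ν (closedBall x r) ∧
      ν (closedBall x r) ≤ ENNReal.ofReal (K * r ^ t)) :
    ∃ a b : ℝ, 0 < a ∧ 0 < b ∧ ∀ A : Finset ℝ, (A : Set ℝ) ⊆ E → ∀ y ∈ E', ∀ R : ℝ, 0 ≤ R →
      (∀ x ∈ A, ∀ x' ∈ A, x < x' → x' - x ≤ R) →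
      ∃ f : ℝ → ℝ, (∀ x ∈ A, f x ∈ E' ∧ |f x - y| ≤ d * R) ∧
        ∀ x ∈ A, ∀ x' ∈ A, x < x' →
          a * (x' - x) ≤ f x' - f x ∧ f x' - f x ≤ b * (x' - x) := by
  have hs1 : s < 1 := by linarith
  have ht0 : 0 < t := by linarith
  set D := (2 * C) ^ (1 / (1 - s)) with hD
  have hD1 : 1 ≤ D := Real.one_le_rpow (by linarith) (by
    have : 0 < 1 - s := by linarith
    positivity)
  obtain ⟨ρ, hρ0, hρ1, hρM⟩ := exists_ratio hst (2 * C * D ^ s * (K ^ 2 * 6 ^ t))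
  have hcount : C * (D / ρ) ^ s + 1 ≤ (K ^ 2)⁻¹ * (1 / (6 * ρ)) ^ t := by
    have h1 : 1 ≤ C * (D / ρ) ^ s := by
      have : 1 ≤ (D / ρ) ^ s := Real.one_le_rpow
        (by rw [le_div_iff₀ hρ0]; linarith) hs0.le
      nlinarith
    have h2 : 2 * (C * (D / ρ) ^ s) ≤ (K ^ 2)⁻¹ * (1 / (6 * ρ)) ^ t := by
      rw [Real.div_rpow (by linarith) hρ0.le, Real.div_rpow (by linarith) (by linarith),
        Real.one_rpow, Real.mul_rpow (by norm_num) hρ0.le]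
      rw [Real.rpow_sub hρ0] at hρM
      have ha : 0 < ρ ^ s := by positivity
      have hb : 0 < ρ ^ t := by positivity
      have hc : (0 : ℝ) < 6 ^ t := by positivity
      have hk : 0 < K := by linarith
      rw [show (K ^ 2)⁻¹ * (1 / (6 ^ t * ρ ^ t)) = 1 / (K ^ 2 * (6 ^ t * ρ ^ t)) by
        field_simp]
      rw [le_div_iff₀ (by positivity)]
      calc _ = 2 * C * D ^ s * (K ^ 2 * 6 ^ t) * (ρ ^ t / ρ ^ s) := by ring
        _ ≤ 1 := hρM
    linarith
  refine ⟨d * ρ, 2 * d * D / ρ, by positivity, by positivity, ?_⟩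
  intro A
  induction A using Finset.strongInduction with
  | H A ih =>
  intro hA y hy R hR0 hAR
  by_cases hsub : ∀ x ∈ A, ∀ x' ∈ A, ¬ x < x'
  · refine ⟨fun _ => y, fun x _ => ⟨hy, ?_⟩, fun x hx x' hx' h => absurd h (hsub x hx x' hx')⟩
    simp only [sub_self, abs_zero]
    positivity
  push Not at hsub
  obtain ⟨x₁, hx₁, x₂, hx₂, hx₁₂⟩ := hsub
  -- Replacing `R` by the exact diameter makes every cluster a proper subset of `A`.
  wlog hmax : ∃ m ∈ A, ∃ m' ∈ A, m' - m = R generalizing R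
  · have hne : A.Nonempty := ⟨x₁, hx₁⟩
    have hR₀ : A.max' hne - A.min' hne ≤ R := by
      rcases (A.min'_le _ (A.max'_mem hne)).lt_or_eq with h | h
      · exact hAR _ (A.min'_mem hne) _ (A.max'_mem hne) h
      · linarith
    obtain ⟨f, hf, hf'⟩ := this (A.max' hne - A.min' hne)
      (by linarith [A.min'_le _ (A.max'_mem hne)])
      (fun x hx x' hx' _ => by linarith [A.min'_le x hx, A.le_max' x' hx'])
      ⟨_, A.min'_mem hne, _, A.max'_mem hne, rfl⟩
    exact ⟨f, fun x hx => ⟨(hf x hx).1, (hf x hx).2.trans (by gcongr)⟩, hf'⟩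
  obtain ⟨m, hm, m', hm', hmR⟩ := hmax
  have hR : 0 < R := by linarith [hAR x₁ hx₁ x₂ hx₂ hx₁₂]
  have hR1 : R ≤ 1 := by linarith [(hEsub (hA hm)).1, (hEsub (hA hm')).2]
  have hmin : ∀ x ∈ A, m ≤ x := fun x hx => by
    by_contra! h
    linarith [hAR x hx m' hm' (by linarith)]
  have hmax : ∀ x ∈ A, x ≤ m' := fun x hx => by
    by_contra! h
    linarith [hAR m hm x hx (by linarith)]
  set r := ρ * R / D with hr
  have hr0 : 0 < r := by positivity
  have hDr : D * r = ρ * R := by rw [hr]; field_simp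
  have hrR : r ≤ R := by nlinarith
  -- The cluster of `x` is indexed by the number of cuts to the left of `x`.
  let c : ℝ → ℕ := fun x => ((cuts A r).filter fun g => g < x).card
  have hcN : ∀ x, c x ≤ (cuts A r).card := fun x => Finset.card_filter_le _ _
  have hcmono : Monotone c := fun x x' h => Finset.card_le_card fun g hg => by
    simp only [Finset.mem_filter] at hg ⊢
    exact ⟨hg.1, by linarith [hg.2]⟩
  have hclt : ∀ x x', x' ∈ A → c x < c x' → r < x' - x := by
    intro x x' hx' h
    by_contra! hcon
    refine absurd h (not_lt.mpr (Finset.card_le_card fun g hg => ?_))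
    simp only [Finset.mem_filter, cuts] at hg ⊢
    refine ⟨hg.1, ?_⟩
    by_contra! hxg
    linarith [hg.1.2 x' hx' hg.2]
  have hceq : ∀ x ∈ A, ∀ x' ∈ A, x < x' → c x = c x' → x' - x ≤ ρ * R := by
    intro x hx x' hx' hxx h
    rw [← hDr]
    refine length_le_of_no_cut hC hs1 hU hA hr0 (hrR.trans hR1) hx hxx ?_
    intro g hg hxg
    by_contra! hgx
    refine absurd h (ne_of_lt (Finset.card_lt_card ⟨fun z hz => ?_, fun hcon => ?_⟩))
    · simp only [Finset.mem_filter] at hz ⊢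
      exact ⟨hz.1, by linarith [hz.2]⟩
    · have := hcon (Finset.mem_filter.mpr ⟨hg, hgx⟩)
      simp only [Finset.mem_filter] at this
      linarith [this.2]
  have hcuts : ((cuts A r).card : ℝ) ≤ C * (D / ρ) ^ s := by
    have h := hU (cuts A r) (fun z hz => hA (Finset.mem_filter.mp hz).1) m R r hr0
      (hrR.trans hR1) hrR
      (fun x hx => ⟨hmin x (Finset.mem_filter.mp hx).1, by
        linarith [hmax x (Finset.mem_filter.mp hx).1]⟩)
      (fun x hx x' hx' hxx =>
        ((Finset.mem_filter.mp hx).2 x' (Finset.mem_filter.mp hx').1 hxx).le)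
    rwa [show R / r = D / ρ by rw [hr]; field_simp] at h
  obtain ⟨p, hpE, hpsep⟩ := exists_separated hK hE' hreg hy (R := d * R / 2)
    (r := 3 * d * ρ * R) (by positivity) (by nlinarith) (by positivity)
    (by
      have : ρ * R ≤ 1 / 3 := by nlinarith
      nlinarith) ((cuts A r).card + 1) (by
      rw [show d * R / 2 / (3 * d * ρ * R) = 1 / (6 * ρ) by field_simp; norm_num]
      push_cast
      linarith)
  have hcl : ∀ i, ∃ f : ℝ → ℝ, i ≤ (cuts A r).card →
      (∀ x ∈ A, c x = i → f x ∈ E' ∧ |f x - p i| ≤ d * (ρ * R)) ∧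
        ∀ x ∈ A, c x = i → ∀ x' ∈ A, c x' = i → x < x' →
          d * ρ * (x' - x) ≤ f x' - f x ∧ f x' - f x ≤ 2 * d * D / ρ * (x' - x) := by
    intro i
    by_cases hi : i ≤ (cuts A r).card
    · obtain ⟨f, hf, hf'⟩ := ih (A.filter fun x => c x = i) (by
          refine Finset.filter_ssubset.mpr ?_
          -- Both extreme points of `A` cannot lie in the same cluster.
          by_contra! hcon
          have := hceq m hm m' hm' (by linarith) ((hcon m hm).trans (hcon m' hm').symm)
          nlinarith)
        (fun x hx => hA (Finset.mem_filter.mp hx).1) (p i) (hpE i (by omega)).1 (ρ * R)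
        (by positivity) (by
          intro x hx x' hx' hxx
          simp only [Finset.mem_filter] at hx hx'
          exact hceq x hx.1 x' hx'.1 hxx (hx.2.trans hx'.2.symm))
      refine ⟨f, fun _ => ⟨fun x hx hxi => hf x (Finset.mem_filter.mpr ⟨hx, hxi⟩), ?_⟩⟩
      intro x hx hxi x' hx' hxi'
      exact hf' x (Finset.mem_filter.mpr ⟨hx, hxi⟩) x' (Finset.mem_filter.mpr ⟨hx', hxi'⟩)
    · exact ⟨0, fun h => absurd h hi⟩
  choose F hF using hcl
  have hball : ∀ x ∈ A, |F (c x) x - y| ≤ d * R := by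
    intro x hx
    have h1 := abs_le.mp ((hF (c x) (hcN x)).1 x hx rfl).2
    have h2 := abs_le.mp (hpE (c x) (by have := hcN x; omega)).2
    have h3 : d * (ρ * R) ≤ d * R / 3 := by
      have := mul_le_mul_of_nonneg_right hρ1 (mul_pos hd hR).le
      nlinarith
    have h4 : 0 < d * R := by positivity
    rw [abs_le]
    constructor <;> linarith [h1.1, h1.2, h2.1, h2.2]
  refine ⟨fun x => F (c x) x, fun x hx => ⟨((hF (c x) (hcN x)).1 x hx rfl).1, hball x hx⟩, ?_⟩
  intro x hx x' hx' hxx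
  rcases (hcmono hxx.le).lt_or_eq with h | h
  · have h1 := abs_le.mp ((hF (c x) (hcN x)).1 x hx rfl).2
    have h2 := abs_le.mp ((hF (c x') (hcN x')).1 x' hx' rfl).2
    have h3 := hpsep _ _ h (by have := hcN x'; omega)
    have h4 := hclt x x' hx' h
    have h5 := hAR x hx x' hx' hxx
    have h6 := abs_le.mp (hball x hx)
    have h7 := abs_le.mp (hball x' hx')
    constructor
    · have : d * ρ * (x' - x) ≤ d * ρ * R := by gcongr
      show _ ≤ F (c x') x' - F (c x) x
      linarith [h1.2, h2.1]
    · have h8 : 2 * d * D / ρ * r ≤ 2 * d * D / ρ * (x' - x) := by gcongr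
      have h9 : 2 * d * D / ρ * r = 2 * d * R := by rw [hr]; field_simp
      show F (c x') x' - F (c x) x ≤ _
      linarith [h6.1, h7.2]
  · have := (hF (c x) (hcN x)).2 x hx rfl x' hx' h.symm hxx
    rw [h] at this
    show _ ≤ F (c x') x' - F (c x) x ∧ F (c x') x' - F (c x) x ≤ _
    rw [h]
    exact this

/-- Passage from finite subsets to `E` by compactness of the product `∏ E'`. -/
lemma exists_embedding_of_finite {E E' : Set ℝ} (hE'c : IsCompact E') {y₀ : ℝ} (hy₀ : y₀ ∈ E')
    {a b : ℝ}
    (h : ∀ A : Finset ℝ, (A : Set ℝ) ⊆ E → ∃ f : ℝ → ℝ, (∀ x ∈ A, f x ∈ E') ∧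
        ∀ x ∈ A, ∀ x' ∈ A, x < x' →
          a * (x' - x) ≤ f x' - f x ∧ f x' - f x ≤ b * (x' - x)) :
    ∃ g : ℝ → ℝ, (∀ x, g x ∈ E') ∧ ∀ x ∈ E, ∀ x' ∈ E, x < x' →
      a * (x' - x) ≤ g x' - g x ∧ g x' - g x ≤ b * (x' - x) := by
  classical
  have hcomp : IsCompact (univ.pi fun _ : ℝ => E') := isCompact_univ_pi fun _ => hE'c
  let S : {q : E × E // (q.1 : ℝ) < q.2} → Set (ℝ → ℝ) := fun q =>
    {f | a * (q.1.2 - q.1.1) ≤ f q.1.2 - f q.1.1 ∧ f q.1.2 - f q.1.1 ≤ b * (q.1.2 - q.1.1)}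
  have hS : ∀ q, IsClosed (S q) := by
    intro q
    simp only [S, ofPred_and]
    exact (isClosed_le (by fun_prop) (by fun_prop)).inter
      (isClosed_le (by fun_prop) (by fun_prop))
  obtain ⟨g, hg1, hg2⟩ := hcomp.inter_iInter_nonempty S hS (by
    intro u
    let A : Finset ℝ := u.image (fun q => (q.1.1 : ℝ)) ∪ u.image (fun q => (q.1.2 : ℝ))
    obtain ⟨f, hf, hf'⟩ := h A (by
      intro x hx
      simp only [A, Finset.coe_union, Finset.coe_image, mem_union, mem_image] at hx
      rcases hx with ⟨q, _, rfl⟩ | ⟨q, _, rfl⟩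
      · exact q.1.1.2
      · exact q.1.2.2)
    refine ⟨fun x => if x ∈ A then f x else y₀, ?_, ?_⟩
    · intro x _
      by_cases hx : x ∈ A
      · simpa [hx] using hf x hx
      · simpa [hx] using hy₀
    · simp only [mem_iInter]
      intro q hq
      have h1 : (q.1.1 : ℝ) ∈ A :=
        Finset.mem_union_left _ (Finset.mem_image_of_mem (fun q => (q.1.1 : ℝ)) hq)
      have h2 : (q.1.2 : ℝ) ∈ A :=
        Finset.mem_union_right _ (Finset.mem_image_of_mem (fun q => (q.1.2 : ℝ)) hq)
      simp only [S, mem_ofPred_eq, h1, h2, if_true]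
      exact hf' _ h1 _ h2 q.2)
  refine ⟨g, fun x => hg1 x (mem_univ x), fun x hx x' hx' hxx => ?_⟩
  exact mem_iInter.mp hg2 ⟨(⟨x, hx⟩, ⟨x', hx'⟩), hxx⟩

/-- Extension from `E` to `ℝ` with the same two slope bounds. A one-sided McShane formula extends
the nondecreasing `(b - a)`-Lipschitz function `g x - a * x` without losing monotonicity. -/
lemma exists_extension {E : Set ℝ} (hEsub : E ⊆ Icc 0 1) (h0E : (0 : ℝ) ∈ E) {a b : ℝ}
    (hab : a ≤ b) {g : ℝ → ℝ}
    (hg : ∀ x ∈ E, ∀ x' ∈ E, x < x' →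
      a * (x' - x) ≤ g x' - g x ∧ g x' - g x ≤ b * (x' - x)) :
    ∃ f : ℝ → ℝ, (∀ x ∈ E, f x = g x) ∧
      ∀ x x' : ℝ, x ≤ x' → a * (x' - x) ≤ f x' - f x ∧ f x' - f x ≤ b * (x' - x) := by
  have : Nonempty E := ⟨⟨0, h0E⟩⟩
  let T : ℝ → E → ℝ := fun x e => g e - a * e + (b - a) * max (x - e) 0
  have hT0 : ∀ (x : ℝ) (e : E), 0 ≤ (b - a) * max (x - e) 0 := fun x e =>
    mul_nonneg (by linarith) (le_max_right _ _)
  have hbdd : ∀ x, BddBelow (range (T x)) := by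
    intro x
    refine ⟨g 0, ?_⟩
    rintro _ ⟨e, rfl⟩
    have h1 := hT0 x e
    have h2 : g 0 ≤ g e - a * e := by
      rcases (hEsub e.2).1.eq_or_lt with h | h
      · rw [← h]; simp
      · linarith [(hg 0 h0E e e.2 h).1]
    simp only [T]
    linarith
  refine ⟨fun x => (⨅ e, T x e) + a * x, ?_, ?_⟩
  · intro x hx
    have h1 : (⨅ e, T x e) = g x - a * x := by
      apply le_antisymm
      · refine (ciInf_le (hbdd x) ⟨x, hx⟩).trans (le_of_eq ?_)
        simp [T]
      · refine le_ciInf fun e => ?_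
        simp only [T]
        rcases lt_trichotomy x e with h | h | h
        · have := (hg x hx e e.2 h).1
          have := hT0 x e
          linarith
        · rw [← h]; simp
        · have := (hg e e.2 x hx h).2
          rw [max_eq_left (by linarith)]
          linarith
    simp only [h1]
    ring
  · intro x x' hxx
    have hmono : (⨅ e, T x e) ≤ ⨅ e, T x' e := by
      refine ciInf_mono (hbdd x) fun e => ?_
      have : max (x - e) 0 ≤ max (x' - (e : ℝ)) 0 := max_le_max (by linarith) le_rfl
      have := mul_le_mul_of_nonneg_left this (sub_nonneg.mpr hab)
      simp only [T]
      linarith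
    have hlip : (⨅ e, T x' e) - (b - a) * (x' - x) ≤ ⨅ e, T x e := by
      refine le_ciInf fun e => ?_
      have h1 := ciInf_le (hbdd x') e
      have h2 : max (x' - (e : ℝ)) 0 ≤ max (x - e) 0 + (x' - x) :=
        max_le (by linarith [le_max_left (x - (e : ℝ)) 0])
          (by linarith [le_max_right (x - (e : ℝ)) 0])
      have h3 := mul_le_mul_of_nonneg_left h2 (sub_nonneg.mpr hab)
      simp only [T] at h1 ⊢
      linarith
    constructor <;> simp only <;> linarith

/-- **Lipschitz extension of ordered regular embeddings.**  Let `0 < s < t ≤ 1`, let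
`E ⊆ [0,1]` be the compact support of an `s`-Ahlfors regular measure with `0, 1 ∈ E`,
and let `E' ⊆ [0,1]` be the compact support of a `t`-Ahlfors regular measure.  Then
there is a map `f : [0,1] → [0,1]`, bi-Lipschitz onto its image, with `f(E) ⊆ E'`. -/
theorem lipschitz_extension_ordered_embedding
    (s t : ℝ) (hs0 : 0 < s) (hst : s < t) (ht1 : t ≤ 1)
    (μ : Measure ℝ) (E : Set ℝ) (hE : E = measureSupport μ)
    (hEc : IsCompact E) (hEsub : E ⊆ Set.Icc (0 : ℝ) 1)
    (h0E : (0 : ℝ) ∈ E) (h1E : (1 : ℝ) ∈ E)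
    (Kμ : ℝ) (hKμ : 1 ≤ Kμ)
    (hregμ : ∀ x ∈ E, ∀ r : ℝ, 0 < r → r ≤ Metric.diam E →
      ENNReal.ofReal (Kμ⁻¹ * r ^ s) ≤ μ (Metric.closedBall x r) ∧
      μ (Metric.closedBall x r) ≤ ENNReal.ofReal (Kμ * r ^ s))
    (ν : Measure ℝ) (E' : Set ℝ) (hE' : E' = measureSupport ν)
    (hE'c : IsCompact E') (hE'sub : E' ⊆ Set.Icc (0 : ℝ) 1) (hE'nt : E'.Nontrivial)
    (Kν : ℝ) (hKν : 1 ≤ Kν)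
    (hregν : ∀ x ∈ E', ∀ r : ℝ, 0 < r → r ≤ Metric.diam E' →
      ENNReal.ofReal (Kν⁻¹ * r ^ t) ≤ ν (Metric.closedBall x r) ∧
      ν (Metric.closedBall x r) ≤ ENNReal.ofReal (Kν * r ^ t)) :
    ∃ f : ℝ → ℝ, Set.MapsTo f (Set.Icc (0 : ℝ) 1) (Set.Icc (0 : ℝ) 1) ∧
      (∃ L : ℝ, 1 ≤ L ∧ ∀ x ∈ Set.Icc (0 : ℝ) 1, ∀ y ∈ Set.Icc (0 : ℝ) 1,
        L⁻¹ * |x - y| ≤ |f x - f y| ∧ |f x - f y| ≤ L * |x - y|) ∧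
      f '' E ⊆ E' := by
  have hdE : (1 : ℝ) ≤ Metric.diam E := by
    have := dist_le_diam_of_mem hEc.isBounded h0E h1E
    simpa using this
  have hd : 0 < Metric.diam E' := Metric.diam_pos hE'nt hE'c.isBounded
  have hU : PackingBound E (Kμ ^ 2 * 6 ^ s) s := fun F hF a R r hr hr1 hrR hFR hsep =>
    card_le_of_separated hs0 hKμ hE hEsub
      (fun x hx r hr hr1 => hregμ x hx r hr (hr1.trans hdE)) F hF a R r hr hr1 hrR hFR hsep
  have hC : 1 ≤ Kμ ^ 2 * 6 ^ s := by
    have h1 : (1 : ℝ) ≤ 6 ^ s := Real.one_le_rpow (by norm_num) hs0.le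
    nlinarith [one_le_pow₀ (n := 2) hKμ]
  obtain ⟨a, b, ha, hb, hab⟩ :=
    exists_finite_embedding hs0 hst ht1 hEsub hC hU hE' hKν hd hregν
  obtain ⟨y₀, hy₀⟩ := hE'nt.nonempty
  obtain ⟨g, hgE', hg⟩ := exists_embedding_of_finite (E := E) (a := a) (b := b) hE'c hy₀ (by
    intro A hA
    obtain ⟨f, hf, hf'⟩ := hab A hA y₀ hy₀ 1 zero_le_one (by
      intro x hx x' hx' _
      linarith [(hEsub (hA hx)).1, (hEsub (hA hx')).2])
    exact ⟨f, fun x hx => (hf x hx).1, hf'⟩)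
  have hle : a ≤ b := by
    have := hg 0 h0E 1 h1E one_pos
    linarith [this.1, this.2]
  obtain ⟨f, hfg, hf⟩ := exists_extension hEsub h0E hle hg
  refine ⟨f, ?_, ⟨1 + a⁻¹ + b, by have := inv_pos.mpr ha; linarith, ?_⟩, ?_⟩
  · intro x hx
    have h0 := hf 0 x hx.1
    have h1 := hf x 1 hx.2
    have h2 := hE'sub (hgE' 0)
    have h3 := hE'sub (hgE' 1)
    rw [← hfg 0 h0E] at h2
    rw [← hfg 1 h1E] at h3
    have h4 := mul_nonneg ha.le (sub_nonneg.mpr hx.1)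
    have h5 := mul_nonneg ha.le (sub_nonneg.mpr hx.2)
    exact ⟨by linarith [h0.1, h2.1], by linarith [h1.1, h3.2]⟩
  · have key : ∀ x x' : ℝ, x ≤ x' → (1 + a⁻¹ + b)⁻¹ * |x - x'| ≤ |f x - f x'| ∧
        |f x - f x'| ≤ (1 + a⁻¹ + b) * |x - x'| := by
      intro x x' h
      obtain ⟨h1, h2⟩ := hf x x' h
      have h3 : 0 ≤ x' - x := by linarith
      have h4 := mul_nonneg ha.le h3
      have h5 := inv_pos.mpr ha
      rw [abs_sub_comm x, abs_sub_comm (f x), abs_of_nonneg h3, abs_of_nonneg (by linarith)]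
      constructor
      · refine le_trans (mul_le_mul_of_nonneg_right ?_ h3) h1
        rw [inv_le_comm₀ (by positivity) ha]
        linarith
      · refine h2.trans (mul_le_mul_of_nonneg_right ?_ h3)
        linarith
    intro x _ y _
    rcases le_total x y with h | h
    · exact key x y h
    · rw [abs_sub_comm x, abs_sub_comm (f x)]
      exact key y x h
  · rintro _ ⟨x, hx, rfl⟩
    rw [hfg x hx]
    exact hgE' x
end

section
/- Let p > 2 be real, α = log 2/log p, and β = 1/((α+1)·log p) = 1/(log 2 + log p). There exist constants A, B > 0 depending only on p such that for every real R ≥ 1: A·2^{2Rβ} ≤ ∑_{N=1}^∞ 2^N·log(1 + (p−2)·p^{2Rβ−N}) ≤ B·(1+R)·2^{2Rβ}. In fact one may take A = 4/p². -/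
open Real

/-!
Write `x = 2 R β` and `n = N + 1`, and cut the sum at `n = ⌊x⌋ + 1`. Beyond the cut, the argument
`y = (p - 2) p ^ (x - n)` lies in `(0, p - 2]`, so `y / (p - 1) ≤ log (1 + y) ≤ y`, and the tail is
comparable to the geometric series `∑ (p - 2) p ^ x (2 / p) ^ n`, whose value from the cut on is
`p * p ^ x * (2 / p) ^ (⌊x⌋ + 1)`. As `x ≤ ⌊x⌋ + 1 ≤ x + 1`, this value lies between `2 * 2 ^ x` and
`p * 2 ^ x` (`geom_tail_bounds`). The tail alone gives the lower bound, because
`2 / (p - 1) ≥ 4 / p ^ 2`. Before the cut, each logarithm is at most `log (p ^ (x + 1))`, that is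
`(x + 1) log p`, and the weights `2 ^ n` sum to at most `2 * 2 ^ x` (`sum_head_le`). The upper bound
follows because `x log p ≤ 2 R`.
-/

/-- The summand of generation `N + 1` in the generation-sum; `x` stands for `2 R β`. -/
noncomputable def gapTerm (p x : ℝ) (N : ℕ) : ℝ :=
  (2 : ℝ) ^ (N + 1) * Real.log (1 + (p - 2) * p ^ (x - ((N : ℝ) + 1)))

/-- The linearization of `gapTerm`, obtained by replacing `log (1 + y)` by `y`. -/
noncomputable def linTerm (p x : ℝ) (N : ℕ) : ℝ :=
  (p - 2) * p ^ x * (2 / p) ^ (N + 1)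

lemma linTerm_eq {p : ℝ} (hp : 2 < p) (x : ℝ) (N : ℕ) :
    linTerm p x N = (2 : ℝ) ^ (N + 1) * ((p - 2) * p ^ (x - ((N : ℝ) + 1))) := by
  have h0 : 0 < p := by linarith
  have h : p ^ (x - ((N : ℝ) + 1)) = p ^ x / p ^ (N + 1) := by
    rw [Real.rpow_sub h0]
    congr 1
    exact_mod_cast Real.rpow_natCast p (N + 1)
  rw [linTerm, h, div_pow]
  ring

lemma gapTerm_nonneg {p : ℝ} (hp : 2 < p) (x : ℝ) (N : ℕ) : 0 ≤ gapTerm p x N := by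
  have h0 : 0 < p := by linarith
  have h1 : 0 < p - 2 := by linarith
  have h2 : 0 ≤ (p - 2) * p ^ (x - ((N : ℝ) + 1)) := by positivity
  exact mul_nonneg (by positivity) (Real.log_nonneg (by linarith))

lemma gapTerm_le_linTerm {p : ℝ} (hp : 2 < p) (x : ℝ) (N : ℕ) :
    gapTerm p x N ≤ linTerm p x N := by
  have h0 : 0 < p := by linarith
  have h1 : 0 < p - 2 := by linarith
  have h2 : 0 < (p - 2) * p ^ (x - ((N : ℝ) + 1)) := by positivity
  rw [linTerm_eq hp, gapTerm]
  gcongr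
  linarith [Real.log_le_sub_one_of_pos (show 0 < 1 + (p - 2) * p ^ (x - ((N : ℝ) + 1)) by linarith)]

lemma linTerm_le_gapTerm {p : ℝ} (hp : 2 < p) {x : ℝ} {N : ℕ} (hx : x ≤ N + 1) :
    linTerm p x N / (p - 1) ≤ gapTerm p x N := by
  have h0 : 0 < p := by linarith
  have h1 : 0 < p - 2 := by linarith
  have hpow : p ^ (x - ((N : ℝ) + 1)) ≤ 1 :=
    Real.rpow_le_one_of_one_le_of_nonpos (by linarith) (by linarith)
  rw [linTerm_eq hp, gapTerm, mul_div_assoc]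
  gcongr
  set y := (p - 2) * p ^ (x - ((N : ℝ) + 1)) with hy
  have hy0 : 0 < y := by positivity
  have hy1 : y ≤ p - 2 := by nlinarith
  -- `1 - 1 / (1 + y) = y / (1 + y)`, and `1 + y ≤ p - 1`.
  calc y / (p - 1) ≤ y / (1 + y) := by gcongr; linarith
    _ = 1 - (1 + y)⁻¹ := by field_simp; ring
    _ ≤ Real.log (1 + y) := Real.one_sub_inv_le_log_of_pos (by linarith)

lemma hasSum_linTerm {p : ℝ} (hp : 2 < p) (x : ℝ) (m : ℕ) :
    HasSum (fun i => linTerm p x (i + m)) (p * p ^ x * (2 / p) ^ (m + 1)) := by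
  have h0 : 0 < p := by linarith
  have h1 : p - 2 ≠ 0 := by linarith
  have hq : 2 / p < 1 := by rwa [div_lt_one h0]
  have hs := (hasSum_geometric_of_lt_one (by positivity) hq).mul_left
    ((p - 2) * p ^ x * (2 / p) ^ (m + 1))
  have hterm : (fun i => linTerm p x (i + m)) =
      fun i => (p - 2) * p ^ x * (2 / p) ^ (m + 1) * (2 / p) ^ i := by
    funext i
    unfold linTerm
    ring
  have hval : p * p ^ x * (2 / p) ^ (m + 1) =
      (p - 2) * p ^ x * (2 / p) ^ (m + 1) * (1 - 2 / p)⁻¹ := by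
    rw [one_sub_div h0.ne', inv_div]
    field_simp
  rw [hterm, hval]
  exact hs

lemma summable_gapTerm {p : ℝ} (hp : 2 < p) (x : ℝ) : Summable (gapTerm p x) :=
  Summable.of_nonneg_of_le (gapTerm_nonneg hp x) (gapTerm_le_linTerm hp x)
    (hasSum_linTerm hp x 0).summable

lemma geom_tail_bounds {p : ℝ} (hp : 2 < p) {x : ℝ} {m : ℕ} (hm : (m : ℝ) ≤ x)
    (hm' : x ≤ m + 1) :
    2 * (2 : ℝ) ^ x ≤ p * p ^ x * (2 / p) ^ (m + 1) ∧
      p * p ^ x * (2 / p) ^ (m + 1) ≤ p * (2 : ℝ) ^ x := by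
  have h0 : 0 < p := by linarith
  have hq0 : 0 < 2 / p := by positivity
  have hq : 2 / p ≤ 1 := by rw [div_le_one h0]; exact hp.le
  have hpx : 0 < p ^ x := by positivity
  have hcast : (2 / p) ^ (m + 1) = (2 / p) ^ ((m : ℝ) + 1) := by
    exact_mod_cast (Real.rpow_natCast (2 / p) (m + 1)).symm
  have hqx : p ^ x * (2 / p) ^ x = (2 : ℝ) ^ x := by
    rw [← Real.mul_rpow h0.le hq0.le, mul_div_cancel₀ _ h0.ne']
  have hlow : (2 / p) ^ (x + 1) ≤ (2 / p) ^ ((m : ℝ) + 1) :=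
    Real.rpow_le_rpow_of_exponent_ge hq0 hq (by linarith)
  have hupp : (2 / p) ^ ((m : ℝ) + 1) ≤ (2 / p) ^ x :=
    Real.rpow_le_rpow_of_exponent_ge hq0 hq hm'
  rw [hcast]
  constructor
  · calc 2 * (2 : ℝ) ^ x = p * p ^ x * (2 / p) ^ (x + 1) := by
          rw [Real.rpow_add hq0, Real.rpow_one, ← hqx]
          field_simp
      _ ≤ _ := by gcongr
  · calc p * p ^ x * (2 / p) ^ ((m : ℝ) + 1) ≤ p * p ^ x * (2 / p) ^ x := by gcongr
      _ = p * (2 : ℝ) ^ x := by rw [mul_assoc, hqx]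

lemma sum_head_le {p : ℝ} (hp : 2 < p) {x : ℝ} {m : ℕ} (hm : (m : ℝ) ≤ x) :
    ∑ N ∈ Finset.range m, gapTerm p x N ≤ 2 * (2 : ℝ) ^ x * ((x + 1) * Real.log p) := by
  have h0 : 0 < p := by linarith
  have h1 : 0 < p - 2 := by linarith
  have hx : 0 ≤ x := (Nat.cast_nonneg m).trans hm
  have hlogp : 0 < Real.log p := Real.log_pos (by linarith)
  have hterm : ∀ N : ℕ, gapTerm p x N ≤ 2 ^ (N + 1) * ((x + 1) * Real.log p) := by
    intro N
    have hN : (0 : ℝ) ≤ N := N.cast_nonneg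
    have hle : p ^ (x - ((N : ℝ) + 1)) ≤ p ^ x :=
      Real.rpow_le_rpow_of_exponent_le (by linarith) (by linarith)
    have hone : 1 ≤ p ^ x := Real.one_le_rpow (by linarith) hx
    have hpos : 0 < p ^ (x - ((N : ℝ) + 1)) := by positivity
    rw [gapTerm, ← Real.log_rpow h0]
    gcongr
    rw [Real.rpow_add h0, Real.rpow_one]
    nlinarith
  have hgeom : ∑ N ∈ Finset.range m, (2 : ℝ) ^ (N + 1) ≤ 2 * 2 ^ x := by
    have h2 : (2 : ℝ) ^ m ≤ 2 ^ x := by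
      rw [← Real.rpow_natCast]
      exact Real.rpow_le_rpow_of_exponent_le (by norm_num) hm
    simp_rw [pow_succ]
    rw [← Finset.sum_mul, geom_sum_eq (by norm_num)]
    linarith
  calc ∑ N ∈ Finset.range m, gapTerm p x N
      ≤ ∑ N ∈ Finset.range m, (2 : ℝ) ^ (N + 1) * ((x + 1) * Real.log p) :=
        Finset.sum_le_sum fun N _ => hterm N
    _ = (∑ N ∈ Finset.range m, (2 : ℝ) ^ (N + 1)) * ((x + 1) * Real.log p) :=
        (Finset.sum_mul ..).symm
    _ ≤ _ := by gcongr

/-- **Two-sided estimate for the generation-sum over gaps of the `p`-Cantor set.**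
For `p > 2`, `α = log 2 / log p` and `β = 1/((α+1) log p) = 1/(log 2 + log p)`, there
are constants `A, B > 0` depending only on `p` (one may take `A = 4/p²`) such that for
every `R ≥ 1`,
`A·2^{2Rβ} ≤ ∑_{N=1}^∞ 2^N log(1 + (p-2) p^{2Rβ-N}) ≤ B·(1+R)·2^{2Rβ}`. -/
theorem cantor_generation_sum_two_sided
    (p : ℝ) (hp : 2 < p) (α β : ℝ)
    (hα : α = Real.log 2 / Real.log p)
    (hβ : β = 1 / (Real.log 2 + Real.log p)) :
    ∃ B : ℝ, 0 < B ∧ ∀ R : ℝ, 1 ≤ R →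
      (4 / p ^ 2) * (2 : ℝ) ^ (2 * R * β) ≤
        (∑' N : ℕ, (2 : ℝ) ^ (N + 1) *
          Real.log (1 + (p - 2) * p ^ (2 * R * β - ((N : ℝ) + 1)))) ∧
      (∑' N : ℕ, (2 : ℝ) ^ (N + 1) *
          Real.log (1 + (p - 2) * p ^ (2 * R * β - ((N : ℝ) + 1)))) ≤
        B * (1 + R) * (2 : ℝ) ^ (2 * R * β) := by
  have h0 : 0 < p := by linarith
  have hlogp : 0 < Real.log p := Real.log_pos (by linarith)
  have hlog2 : 0 < Real.log 2 := Real.log_pos (by norm_num)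
  refine ⟨4 + 2 * Real.log p + p, by positivity, fun R hR => ?_⟩
  have hβ0 : 0 < β := by rw [hβ]; positivity
  have hβlog : β * Real.log p ≤ 1 := by
    rw [hβ, one_div_mul_eq_div, div_le_one (by positivity)]
    linarith
  have hxlog : 2 * R * β * Real.log p ≤ 2 * R := by nlinarith
  have hx0 : 0 ≤ 2 * R * β := by positivity
  generalize 2 * R * β = x at *
  change _ ≤ ∑' N, gapTerm p x N ∧ ∑' N, gapTerm p x N ≤ _
  have hm : ((⌊x⌋₊ : ℕ) : ℝ) ≤ x := Nat.floor_le hx0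
  have hm' : x ≤ (⌊x⌋₊ : ℕ) + 1 := (Nat.lt_floor_add_one x).le
  generalize ⌊x⌋₊ = m at hm hm'
  have hsum := summable_gapTerm hp x
  have htsum : Summable fun i => gapTerm p x (i + m) := (summable_nat_add_iff m).2 hsum
  have hlin := hasSum_linTerm hp x m
  obtain ⟨hlow, hupp⟩ := geom_tail_bounds hp hm hm'
  have h2x : 0 < (2 : ℝ) ^ x := by positivity
  rw [← hsum.sum_add_tsum_nat_add m]
  constructor
  · have htail := (hlin.div_const (p - 1)).tsum_eq.symm.trans_le <|
      (hlin.div_const (p - 1)).summable.tsum_le_tsum (fun i => linTerm_le_gapTerm hp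
        (by push_cast; linarith [(Nat.cast_nonneg i : (0 : ℝ) ≤ i)])) htsum
    have hhead : 0 ≤ ∑ N ∈ Finset.range m, gapTerm p x N :=
      Finset.sum_nonneg fun N _ => gapTerm_nonneg hp x N
    have hconst : 4 / p ^ 2 ≤ 2 / (p - 1) := by
      rw [div_le_div_iff₀ (by positivity) (by linarith)]
      nlinarith [sq_nonneg (p - 1)]
    calc 4 / p ^ 2 * (2 : ℝ) ^ x ≤ 2 / (p - 1) * 2 ^ x := by gcongr
      _ = 2 * 2 ^ x / (p - 1) := by ring
      _ ≤ p * p ^ x * (2 / p) ^ (m + 1) / (p - 1) :=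
        div_le_div_of_nonneg_right hlow (by linarith)
      _ ≤ _ := by linarith
  · have htail := (htsum.tsum_le_tsum (fun i => gapTerm_le_linTerm hp x (i + m))
      hlin.summable).trans_eq hlin.tsum_eq
    have hhead := sum_head_le hp hm
    calc _ ≤ 2 * (2 : ℝ) ^ x * ((x + 1) * Real.log p) + p * 2 ^ x := by linarith
      _ = (2 * (x * Real.log p) + 2 * Real.log p + p) * 2 ^ x := by ring
      _ ≤ (4 + 2 * Real.log p + p) * (1 + R) * 2 ^ x := by
        gcongr
        nlinarith
end
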